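/- For every simplicial complex Y ⊆ ∂Δ_n one has the explicit formulas: (1) P̲_n(Y) = ∏_{σ∈Y} p_σ · ∏_{σ∈E(Y)} q_σ; (2) P̄_n(Y) = ∏_{σ∈∂Δ_n, σ∉Y} q_σ · ∏_{σ∈M(Y)} p_σ. -/

import Mathlib

open Finset

/-- The full simplex `Δₙ`: all nonempty subsets of `[n] = {0,…,n}`. -/
def simplexAll (n : ℕ) : Finset (Finset (Fin (n+1))) :=
  Finset.univ.filter fun σ => σ.Nonempty

/-- The boundary `∂Δₙ`: all nonempty proper subsets of `[n]`. -/
def bdry (n : ℕ) : Finset (Finset (Fin (n+1))) :=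
  Finset.univ.filter fun σ => σ.Nonempty ∧ σ ≠ Finset.univ

/-- A hypergraph is a simplicial complex if it is closed under passing to
nonempty subsets. -/
def IsComplex {n : ℕ} (X : Finset (Finset (Fin (n+1)))) : Prop :=
  ∀ σ ∈ X, ∀ τ : Finset (Fin (n+1)), τ ⊆ σ → τ.Nonempty → τ ∈ X

instance {n : ℕ} (X : Finset (Finset (Fin (n+1)))) : Decidable (IsComplex X) :=
  inferInstanceAs (Decidable (∀ σ ∈ X, ∀ τ : Finset (Fin (n+1)), τ ⊆ σ → τ.Nonempty → τ ∈ X))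

/-- The dual hypergraph `c(X) = {σ̂ : σ ∈ ∂Δₙ, σ ∉ X}`, where `σ̂ = [n] \ σ`. -/
def dual {n : ℕ} (X : Finset (Finset (Fin (n+1)))) : Finset (Finset (Fin (n+1))) :=
  (bdry n \ X).image fun σ => σᶜ

/-- `X̄`: the smallest simplicial complex containing the hypergraph `X`. -/
def clUp {n : ℕ} (X : Finset (Finset (Fin (n+1)))) : Finset (Finset (Fin (n+1))) :=
  Finset.univ.filter fun τ => τ.Nonempty ∧ ∃ σ ∈ X, τ ⊆ σ

/-- `X̲`: the largest simplicial complex contained in the hypergraph `X`. -/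
def clLow {n : ℕ} (X : Finset (Finset (Fin (n+1)))) : Finset (Finset (Fin (n+1))) :=
  Finset.univ.filter fun τ => τ.Nonempty ∧ ∀ σ : Finset (Fin (n+1)), σ ⊆ τ → σ.Nonempty → σ ∈ X

/-- The Bernoulli measure with parameters `p` on hypergraphs contained in the
ambient set `S` of simplices: `P(X) = ∏_{σ∈X} p σ · ∏_{σ∈S\X} (1 - p σ)`. -/
def bern {n : ℕ} (S : Finset (Finset (Fin (n+1)))) (p : Finset (Fin (n+1)) → ℝ)
    (X : Finset (Finset (Fin (n+1)))) : ℝ :=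
  (∏ σ ∈ X, p σ) * ∏ σ ∈ S \ X, (1 - p σ)

/-- The upper measure: `P̄(Y) = Σ_{X ⊆ S, X̄ = Y} P(X)`. -/
def upperP {n : ℕ} (S : Finset (Finset (Fin (n+1)))) (p : Finset (Fin (n+1)) → ℝ)
    (Y : Finset (Finset (Fin (n+1)))) : ℝ :=
  ∑ X ∈ S.powerset.filter (fun X => clUp X = Y), bern S p X

/-- The lower measure: `P̲(Y) = Σ_{X ⊆ S, X̲ = Y} P(X)`. -/
def lowerP {n : ℕ} (S : Finset (Finset (Fin (n+1)))) (p : Finset (Fin (n+1)) → ℝ)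
    (Y : Finset (Finset (Fin (n+1)))) : ℝ :=
  ∑ X ∈ S.powerset.filter (fun X => clLow X = Y), bern S p X

/-- External simplices of `Y` relative to the ambient set `S`: simplices
`σ ∈ S` with `σ ∉ Y` but every nonempty proper subset of `σ` in `Y`. -/
def extSimp {n : ℕ} (S Y : Finset (Finset (Fin (n+1)))) : Finset (Finset (Fin (n+1))) :=
  S.filter fun σ => σ ∉ Y ∧ ∀ τ : Finset (Fin (n+1)), τ ⊂ σ → τ.Nonempty → τ ∈ Y

/-- Maximal simplices of `Y`: simplices of `Y` not properly contained in another
simplex of `Y`. -/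
def maxSimp {n : ℕ} (Y : Finset (Finset (Fin (n+1)))) : Finset (Finset (Fin (n+1))) :=
  Y.filter fun σ => ∀ τ ∈ Y, σ ⊆ τ → σ = τ

/-!
The maps `X ↦ X̄` and `X ↦ X̲` are left and right adjoint to the inclusion of complexes into
hypergraphs, and their fibres over a complex `Y` are intervals of the Boolean lattice of the
hypergraphs in `S`: `X̄ = Y` iff `M(Y) ⊆ X ⊆ Y`, and `X̲ = Y` iff `Y ⊆ X ⊆ S \ E(Y)`. Under the
Bernoulli measure an interval `[A, C]` only prescribes that the simplices of `A` are present and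
those outside `C` absent; these choices are independent, so it has mass
`∏_{σ ∈ A} p_σ · ∏_{σ ∈ S \ C} q_σ`.
-/

theorem sum_Icc_prod_mul_prod_sdiff {ι R : Type*} [DecidableEq ι] [CommSemiring R]
    {A C S : Finset ι} (hAC : A ⊆ C) (hCS : C ⊆ S) (f g : ι → R) :
    ∑ X ∈ Icc A C, (∏ i ∈ X, f i) * ∏ i ∈ S \ X, g i =
      ((∏ i ∈ A, f i) * ∏ i ∈ S \ C, g i) * ∏ i ∈ C \ A, (f i + g i) := by
  have disjoint_of_mem {T : Finset ι} (hT : T ∈ (C \ A).powerset) : Disjoint A T :=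
    disjoint_sdiff.mono_right (mem_powerset.mp hT)
  have union_injOn : Set.InjOn (A ∪ ·) ((C \ A).powerset : Set (Finset ι)) := by
    intro T hT U hU hTU
    rw [← union_sdiff_cancel_left (disjoint_of_mem hT), show A ∪ T = A ∪ U from hTU,
      union_sdiff_cancel_left (disjoint_of_mem hU)]
  rw [Icc_eq_image_powerset hAC, sum_image union_injOn, prod_add, mul_sum]
  refine sum_congr rfl fun T hT ↦ ?_
  have hTC : T ⊆ C \ A := mem_powerset.mp hT
  have sdiff_union_eq : S \ (A ∪ T) = (S \ C) ∪ ((C \ A) \ T) := by grind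
  have disjoint_sdiffs : Disjoint (S \ C) ((C \ A) \ T) :=
    disjoint_sdiff_self_left.mono_right (sdiff_subset.trans sdiff_subset)
  rw [sdiff_union_eq, prod_union (disjoint_of_mem hT), prod_union disjoint_sdiffs, mul_mul_mul_comm]

section Hypergraph

variable {n : ℕ} {S X Y : Finset (Finset (Fin (n + 1)))} {σ τ : Finset (Fin (n + 1))}

theorem sum_bern_Icc {A C : Finset (Finset (Fin (n + 1)))} (hAC : A ⊆ C) (hCS : C ⊆ S)
    (p : Finset (Fin (n + 1)) → ℝ) :
    ∑ X ∈ Icc A C, bern S p X = (∏ σ ∈ A, p σ) * ∏ σ ∈ S \ C, (1 - p σ) := by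
  simp only [bern, sum_Icc_prod_mul_prod_sdiff hAC hCS, add_sub_cancel, prod_const_one, mul_one]

theorem mem_simplexAll : σ ∈ simplexAll n ↔ σ.Nonempty := by
  simp only [simplexAll, mem_filter_univ]

theorem bdry_subset_simplexAll (n : ℕ) : bdry n ⊆ simplexAll n :=
  monotone_filter_right univ fun _ _ ↦ And.left

theorem mem_clUp : τ ∈ clUp X ↔ τ.Nonempty ∧ ∃ σ ∈ X, τ ⊆ σ := by
  simp only [clUp, mem_filter_univ]

theorem mem_clLow : τ ∈ clLow X ↔ τ.Nonempty ∧ ∀ σ ⊆ τ, σ.Nonempty → σ ∈ X := by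
  simp only [clLow, mem_filter_univ]

theorem mem_extSimp :
    σ ∈ extSimp S Y ↔ σ ∈ S ∧ σ ∉ Y ∧ ∀ τ ⊂ σ, τ.Nonempty → τ ∈ Y :=
  mem_filter

theorem mem_maxSimp : σ ∈ maxSimp Y ↔ Maximal (· ∈ Y) σ := by
  simp only [maxSimp, mem_filter, maximal_iff]

theorem maxSimp_subset (Y : Finset (Finset (Fin (n + 1)))) : maxSimp Y ⊆ Y :=
  filter_subset _ _

theorem subset_clUp (hX : X ⊆ simplexAll n) : X ⊆ clUp X :=
  fun σ hσ ↦ mem_clUp.mpr ⟨mem_simplexAll.mp (hX hσ), σ, hσ, Subset.rfl⟩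

theorem clLow_subset (X : Finset (Finset (Fin (n + 1)))) : clLow X ⊆ X := by
  intro σ hσ
  obtain ⟨σ_nonempty, faces_mem⟩ := mem_clLow.mp hσ
  exact faces_mem σ Subset.rfl σ_nonempty

theorem clUp_subset_iff (hX : X ⊆ simplexAll n) (hYc : IsComplex Y) : clUp X ⊆ Y ↔ X ⊆ Y := by
  refine ⟨(subset_clUp hX).trans, fun hXY τ hτ ↦ ?_⟩
  obtain ⟨τ_nonempty, σ, hσ, hτσ⟩ := mem_clUp.mp hτ
  exact hYc σ (hXY hσ) τ hτσ τ_nonempty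

theorem subset_clLow_iff (hY : Y ⊆ simplexAll n) (hYc : IsComplex Y) : Y ⊆ clLow X ↔ Y ⊆ X :=
  ⟨fun h ↦ h.trans (clLow_subset X), fun hYX σ hσ ↦
    mem_clLow.mpr ⟨mem_simplexAll.mp (hY hσ), fun τ hτσ hτ ↦ hYX (hYc σ hσ τ hτσ hτ)⟩⟩

theorem subset_clUp_iff (hY : Y ⊆ simplexAll n) (hXY : X ⊆ Y) : Y ⊆ clUp X ↔ maxSimp Y ⊆ X := by
  constructor
  · intro hYX σ hσ
    have σ_maximal := mem_maxSimp.mp hσ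
    obtain ⟨-, τ, hτ, hστ⟩ := mem_clUp.mp (hYX σ_maximal.prop)
    rwa [σ_maximal.eq_of_le (hXY hτ) hστ]
  · intro hmax τ hτ
    obtain ⟨σ, hτσ, σ_maximal⟩ := Y.exists_le_maximal hτ
    exact mem_clUp.mpr
      ⟨mem_simplexAll.mp (hY hτ), σ, hmax (mem_maxSimp.mpr σ_maximal), hτσ⟩

theorem clLow_subset_iff (hS : S ⊆ simplexAll n) (hXS : X ⊆ S) (hYX : Y ⊆ X) :
    clLow X ⊆ Y ↔ Disjoint X (extSimp S Y) := by
  rw [disjoint_left]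
  constructor
  · intro hXY σ hσX hσ
    obtain ⟨hσS, hσY, faces_mem⟩ := mem_extSimp.mp hσ
    refine hσY (hXY (mem_clLow.mpr ⟨mem_simplexAll.mp (hS hσS), fun τ hτσ hτ ↦ ?_⟩))
    obtain rfl | hτσ := hτσ.eq_or_ssubset
    · exact hσX
    · exact hYX (faces_mem τ hτσ hτ)
  · -- A minimal simplex of `X̲` outside `Y` would be an external simplex of `Y` lying in `X`.
    intro hdisj
    by_contra hXY
    obtain ⟨ρ, hρ⟩ := sdiff_nonempty.mpr hXY
    obtain ⟨σ, -, σ_minimal⟩ := (clLow X \ Y).exists_le_minimal hρ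
    obtain ⟨hσX, hσY⟩ := mem_sdiff.mp σ_minimal.prop
    refine hdisj (clLow_subset X hσX)
      (mem_extSimp.mpr ⟨hXS (clLow_subset X hσX), hσY, fun τ hτσ hτ ↦ ?_⟩)
    by_contra hτY
    have hτX : τ ∈ clLow X :=
      mem_clLow.mpr ⟨hτ, fun υ hυτ ↦ (mem_clLow.mp hσX).2 υ (hυτ.trans hτσ.subset)⟩
    exact σ_minimal.not_prop_of_lt hτσ (mem_sdiff.mpr ⟨hτX, hτY⟩)

theorem clUp_eq_iff (hX : X ⊆ simplexAll n) (hY : Y ⊆ simplexAll n) (hYc : IsComplex Y) :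
    clUp X = Y ↔ X ∈ Icc (maxSimp Y) Y := by
  rw [Subset.antisymm_iff, clUp_subset_iff hX hYc, mem_Icc, and_comm (a := maxSimp Y ⊆ X)]
  exact and_congr_right (subset_clUp_iff hY)

theorem clLow_eq_iff (hS : S ⊆ simplexAll n) (hXS : X ⊆ S) (hYS : Y ⊆ S) (hYc : IsComplex Y) :
    clLow X = Y ↔ X ∈ Icc Y (S \ extSimp S Y) := by
  rw [Subset.antisymm_iff, subset_clLow_iff (hYS.trans hS) hYc, and_comm, mem_Icc, subset_sdiff,
    and_iff_right hXS]
  exact and_congr_right (clLow_subset_iff hS hXS)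

theorem upperP_eq (hS : S ⊆ simplexAll n) (p : Finset (Fin (n + 1)) → ℝ) (hYS : Y ⊆ S)
    (hYc : IsComplex Y) :
    upperP S p Y = (∏ σ ∈ S \ Y, (1 - p σ)) * ∏ σ ∈ maxSimp Y, p σ := by
  have fibre_eq : {X ∈ S.powerset | clUp X = Y} = Icc (maxSimp Y) Y := by
    ext X
    rw [mem_filter, mem_powerset,
      and_congr_right fun hXS ↦ clUp_eq_iff (hXS.trans hS) (hYS.trans hS) hYc]
    exact and_iff_right_of_imp fun hX ↦ (mem_Icc.mp hX).2.trans hYS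
  rw [upperP, fibre_eq, sum_bern_Icc (maxSimp_subset Y) hYS, mul_comm]

theorem lowerP_eq (hS : S ⊆ simplexAll n) (p : Finset (Fin (n + 1)) → ℝ) (hYS : Y ⊆ S)
    (hYc : IsComplex Y) :
    lowerP S p Y = (∏ σ ∈ Y, p σ) * ∏ σ ∈ extSimp S Y, (1 - p σ) := by
  have fibre_eq : {X ∈ S.powerset | clLow X = Y} = Icc Y (S \ extSimp S Y) := by
    ext X
    rw [mem_filter, mem_powerset, and_congr_right fun hXS ↦ clLow_eq_iff hS hXS hYS hYc]
    exact and_iff_right_of_imp fun hX ↦ (mem_Icc.mp hX).2.trans sdiff_subset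
  have extSimp_subset : extSimp S Y ⊆ S := filter_subset _ _
  have disjoint_extSimp : Disjoint Y (extSimp S Y) :=
    disjoint_left.mpr fun σ hσY hσ ↦ (mem_extSimp.mp hσ).2.1 hσY
  rw [lowerP, fibre_eq, sum_bern_Icc (subset_sdiff.mpr ⟨hYS, disjoint_extSimp⟩) sdiff_subset,
    Finset.sdiff_sdiff_eq_self extSimp_subset]

theorem measures_explicit_general (hS : S ⊆ simplexAll n) (p : Finset (Fin (n + 1)) → ℝ)
    (hYS : Y ⊆ S) (hYc : IsComplex Y) :
    lowerP S p Y = (∏ σ ∈ Y, p σ) * ∏ σ ∈ extSimp S Y, (1 - p σ) ∧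
      upperP S p Y = (∏ σ ∈ S \ Y, (1 - p σ)) * ∏ σ ∈ maxSimp Y, p σ :=
  ⟨lowerP_eq hS p hYS hYc, upperP_eq hS p hYS hYc⟩

end Hypergraph

/-- Explicit formulae for the lower and upper measures: for a simplicial
complex `Y ⊆ ∂Δₙ`, `P̲ₙ(Y) = ∏_{σ∈Y} p_σ · ∏_{σ∈E(Y)} q_σ` and
`P̄ₙ(Y) = ∏_{σ∉Y} q_σ · ∏_{σ∈M(Y)} p_σ`. -/
theorem measures_explicit (n : ℕ) (hn : 1 ≤ n) (p : Finset (Fin (n+1)) → ℝ)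
    (hp : ∀ σ ∈ bdry n, 0 ≤ p σ ∧ p σ ≤ 1)
    (Y : Finset (Finset (Fin (n+1)))) (hY : Y ⊆ bdry n) (hYc : IsComplex Y) :
    (lowerP (bdry n) p Y
      = (∏ σ ∈ Y, p σ) * ∏ σ ∈ extSimp (bdry n) Y, (1 - p σ)) ∧
    (upperP (bdry n) p Y
      = (∏ σ ∈ bdry n \ Y, (1 - p σ)) * ∏ σ ∈ maxSimp Y, p σ) :=
  measures_explicit_general (bdry_subset_simplexAll n) p hY hYc
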